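/- Let n ∈ ℕ and α a partition of n. For μ = (1^{m₁},2^{m₂},…) let a_μ = ∏_i i^{m_i}. Then (1) the restrictions of the irreducible characters χ^λ, λ < α, to classes of cycle type < α form a ℤ-basis for the ℤ-span of all character restrictions to those classes, and (2) det X_(α) = ∏_{μ < α} a_μ, where X_(α) = (χ^λ_μ)_{λ,μ < α}. -/

import Mathlib

open scoped Classical

namespace SnTable

variable {n : ℕ}

/-- The parts of a partition, listed in weakly decreasing order. -/
def descList (μ : Nat.Partition n) : List ℕ := (μ.parts.sort (· ≤ ·)).reverse

/-- Strict lexicographic order on partitions of `n` (comparing the lists of parts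
written in decreasing order). -/
def plex (μ ν : Nat.Partition n) : Prop := List.Lex (· < ·) (descList μ) (descList ν)

/-- Weak lexicographic order on partitions of `n`. -/
def plexLE (μ ν : Nat.Partition n) : Prop := μ = ν ∨ plex μ ν

/-- `a_μ = ∏ i^{m_i(μ)}`, the product of the parts of `μ`. -/
def aNum (μ : Nat.Partition n) : ℕ := μ.parts.prod

/-- `b_μ = ∏ m_i(μ)!`, the product of the factorials of the multiplicities. -/
def bNum (μ : Nat.Partition n) : ℕ :=
  ∏ i ∈ μ.parts.toFinset, (μ.parts.count i).factorial

/-- `z_μ = a_μ b_μ`, the centralizer order of an element of cycle type `μ` in `S_n`. -/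
def zNum (μ : Nat.Partition n) : ℕ := aNum μ * bNum μ

/-- The cycle type of a permutation of `Fin n`, as a partition of `n`. -/
def cycleTypePartition (g : Equiv.Perm (Fin n)) : Nat.Partition n :=
  (Fintype.card_fin n) ▸ g.partition

/-- The value at `g` of the permutation character `ξ^λ` of `S_n` obtained by inducing the
trivial character from the Young subgroup `S_λ`: it counts the ordered set partitions of
`Fin n` with block sizes `λ₁ ≥ λ₂ ≥ …` that are fixed by `g`. -/
def permChar (lam : Nat.Partition n) (g : Equiv.Perm (Fin n)) : ℕ :=
  Fintype.card {f : Fin n → Fin (descList lam).length //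
    (∀ x, f (g x) = f x) ∧
    ∀ j, (Finset.univ.filter fun x => f x = j).card = (descList lam).get j}

/-- `X` is the character table of the symmetric group `S_n`, with rows and columns indexed
by the partitions of `n`: each row is an irreducible character (as a class function, via
cycle types), distinct rows are distinct characters, and the labelling is the standard one,
pinned down by the fact that the transition matrix expressing the Young permutation
characters `ξ^λ` in terms of the rows of `X` is unitriangular with respect to the
lexicographic order. -/
def IsCharTable (X : Nat.Partition n → Nat.Partition n → ℤ) : Prop :=
  (∀ lam : Nat.Partition n, ∃ V : FDRep ℂ (Equiv.Perm (Fin n)),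
      CategoryTheory.Simple V ∧
      ∀ g : Equiv.Perm (Fin n), V.character g = (X lam (cycleTypePartition g) : ℂ)) ∧
  (∃ d : Nat.Partition n → Nat.Partition n → ℤ,
      (∀ lam, d lam lam = 1) ∧
      (∀ lam mu, d lam mu ≠ 0 → plexLE lam mu) ∧
      (∀ lam (g : Equiv.Perm (Fin n)),
        (permChar lam g : ℤ) = ∑ mu, d lam mu * X mu (cycleTypePartition g))) ∧
  Function.Injective X


/-!
Let `D` be the unitriangular matrix that expresses the Young permutation characters in terms of the
irreducible ones, so that `D * X = Y` with `Y λ μ = ξ^λ(g)` for `g` of cycle type `μ`. The ordered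
set partitions of type `λ` fixed by `g` are the ways of merging the cycles of `g` into blocks of
sizes `λ₁, λ₂, …`. Merging does not decrease power sums, and power sums with a large exponent detect
the lexicographic order, so `Y λ μ = 0` for `λ < μ`; moreover `Y μ μ = b_μ`.

Orthogonality of characters says `Xᵀ * X = diag (a_μ b_μ)`, that is, `Yᵀ * U = diag (a_μ b_μ)` for
`U = Dᵀ⁻¹ * X`. Since `Yᵀ` is upper triangular with diagonal entries `b_μ`, the matrix `U` is upper
triangular with diagonal entries `a_μ`. Thus `X = Dᵀ * U` is an LU factorization, and it restricts
to the leading principal blocks `X_(α)`, giving the determinant; the row span of the first columns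
is that of the corresponding block of `U`, hence that of `X_(α)`.
-/

section Matrix

open Matrix

variable {ι κ ν R : Type*} [CommRing R]

theorem span_range_row_mul_le [Fintype κ] (A : Matrix ι κ R) (B : Matrix κ ν R) :
    Submodule.span R (Set.range (A * B).row) ≤ Submodule.span R (Set.range B.row) := by
  rw [Submodule.span_le, ← range_vecMulLinear]
  rintro _ ⟨i, rfl⟩
  exact ⟨A i, (mul_apply_eq_vecMul A B i).symm⟩

theorem transpose_mul_self_eq_diagonal [IsDomain R] [Fintype ι] [DecidableEq ι]
    {X : Matrix ι ι R} {w z : ι → R} {c : R} (hc : c ≠ 0) (hwz : ∀ i, w i * z i = c)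
    (hX : X * (diagonal w * Xᵀ) = c • (1 : Matrix ι ι R)) : Xᵀ * X = diagonal z := by
  have hdet : X.det ≠ 0 := by
    refine left_ne_zero_of_mul (b := (diagonal w * Xᵀ).det) ?_
    rw [← det_mul, hX, det_smul, det_one, mul_one]
    exact pow_ne_zero _ hc
  have hw : (diagonal w).det ≠ 0 := by
    rw [det_diagonal]
    exact Finset.prod_ne_zero_iff.mpr fun i _ => left_ne_zero_of_mul (hwz i ▸ hc)
  apply (isRegular_of_isLeftRegular_det (IsRegular.of_ne_zero hw).left).left
  apply (isRegular_of_isLeftRegular_det (IsRegular.of_ne_zero hdet).left).left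
  calc X * (diagonal w * (Xᵀ * X)) = X * (diagonal w * Xᵀ) * X := by simp only [Matrix.mul_assoc]
    _ = X * (c • (1 : Matrix ι ι R)) := by
      rw [hX, Matrix.smul_mul, Matrix.mul_smul, Matrix.one_mul, Matrix.mul_one]
    _ = X * (diagonal w * diagonal z) := by
      rw [diagonal_mul_diagonal, funext hwz, smul_one_eq_diagonal]

section Triangular

variable [LinearOrder ι] [Fintype ι]

theorem mul_apply_self_of_isUpperTriangular {U W : Matrix ι ι R} (hU : U.IsUpperTriangular)
    (hW : W.IsUpperTriangular) (i : ι) : (U * W) i i = U i i * W i i := by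
  rw [mul_apply, Finset.sum_eq_single_of_mem i (Finset.mem_univ i)]
  intro k _ hk
  rcases hk.lt_or_gt with hki | hik
  · rw [hU hki, zero_mul]
  · rw [hW hik, mul_zero]

theorem isUpperTriangular_of_mul_left [IsDomain R] {U W : Matrix ι ι R}
    (hU : U.IsUpperTriangular) (hdiag : ∀ i, U i i ≠ 0) (hUW : (U * W).IsUpperTriangular) :
    W.IsUpperTriangular := by
  intro i j
  induction i using WellFoundedGT.induction with
  | ind i ih =>
    intro (hji : j < i)
    have hzero : U i i * W i j = 0 := by
      rw [← hUW hji, mul_apply, Finset.sum_eq_single_of_mem i (Finset.mem_univ i)]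
      intro k _ hk
      rcases hk.lt_or_gt with hki | hik
      · rw [hU hki, zero_mul]
      · rw [ih k hik (hji.trans hik), mul_zero]
    exact (mul_eq_zero.mp hzero).resolve_left (hdiag i)

/-- `X = L * U` is an LU factorization: `L` is lower triangular with ones on the diagonal and
`U` is upper triangular. -/
structure IsLU (X L U : Matrix ι ι R) : Prop where
  eq_mul : X = L * U
  lower : L.IsLowerTriangular
  diag_eq_one : ∀ i, L i i = 1
  upper : U.IsUpperTriangular

namespace IsLU

variable {X L U : Matrix ι ι R}

theorem isUnit_det_left (h : IsLU X L U) : IsUnit L.det := by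
  simp [det_of_isLowerTriangular L h.lower, h.diag_eq_one]

theorem det_eq_prod_diag (h : IsLU X L U) : X.det = ∏ i, U i i := by
  rw [h.eq_mul, det_mul, det_of_isLowerTriangular L h.lower, det_of_isUpperTriangular h.upper]
  simp only [h.diag_eq_one, Finset.prod_const_one, one_mul]

theorem linearIndependent_row [IsDomain R] (h : IsLU X L U) (hU : ∀ i, U i i ≠ 0) :
    LinearIndependent R X.row := by
  apply linearIndependent_rows_of_det_ne_zero (A := X)
  rw [h.det_eq_prod_diag]
  exact Finset.prod_ne_zero_iff.mpr fun i _ => hU i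

theorem span_range_row_eq (h : IsLU X L U) :
    Submodule.span R (Set.range X.row) = Submodule.span R (Set.range U.row) := by
  apply le_antisymm
  · rw [h.eq_mul]
    exact span_range_row_mul_le L U
  · have hU : U = L⁻¹ * X := by rw [h.eq_mul, nonsing_inv_mul_cancel_left _ _ h.isUnit_det_left]
    nth_rw 1 [hU]
    exact span_range_row_mul_le L⁻¹ X

variable {p : ι → Prop}

theorem submatrix_id_val [Fintype (Subtype p)] (h : IsLU X L U) (hp : Antitone p) :
    X.submatrix id (Subtype.val : Subtype p → ι) =
      L.submatrix id (Subtype.val : Subtype p → ι) * U.toSquareBlockProp p := by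
  ext i ⟨j, hj⟩
  simp only [h.eq_mul, toSquareBlockProp_def, submatrix_apply, mul_apply, id, of_apply]
  rw [← Finset.sum_subtype (p := p) (Finset.univ.filter p) (by simp) (fun k => L i k * U k j)]
  refine (Finset.sum_subset (Finset.filter_subset _ _) fun k _ hk => ?_).symm
  have hjk : j < k := not_le.mp fun hkj => hk (by simpa using hp hkj hj)
  rw [h.upper hjk, mul_zero]

theorem toSquareBlockProp [Fintype (Subtype p)] (h : IsLU X L U) (hp : Antitone p) :
    IsLU (X.toSquareBlockProp p) (L.toSquareBlockProp p) (U.toSquareBlockProp p) where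
  eq_mul := congrArg (submatrix · Subtype.val id) (h.submatrix_id_val hp)
  lower := h.lower.submatrix
  diag_eq_one i := h.diag_eq_one i
  upper := h.upper.submatrix

theorem span_range_row_toSquareBlockProp (h : IsLU X L U) (hp : Antitone p) :
    Submodule.span R (Set.range (X.toSquareBlockProp p).row) =
      Submodule.span R (Set.range (X.submatrix id (Subtype.val : Subtype p → ι)).row) := by
  have := Fintype.ofFinite (Subtype p)
  apply le_antisymm
  · apply Submodule.span_mono
    rintro _ ⟨i, rfl⟩
    exact ⟨i, rfl⟩
  · rw [(h.toSquareBlockProp hp).span_range_row_eq, h.submatrix_id_val hp]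
    exact span_range_row_mul_le _ _

end IsLU

-- `Dᵀ` is the lower factor `L`; the upper one is read off `(D * X)ᵀ * (L⁻¹ * X) = Xᵀ * X`.
theorem exists_isLU_of_transpose_mul_self [IsDomain R] {X D : Matrix ι ι R} {a b : ι → R}
    (hD : D.IsUpperTriangular) (hD_diag : ∀ i, D i i = 1) (hDX : (D * X).IsLowerTriangular)
    (hDX_diag : ∀ i, (D * X) i i = b i) (hb : ∀ i, b i ≠ 0)
    (hX : Xᵀ * X = diagonal fun i => a i * b i) :
    ∃ L U : Matrix ι ι R, IsLU X L U ∧ ∀ i, U i i = a i := by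
  have hdet : IsUnit Dᵀ.det := by
    simp [det_of_isUpperTriangular hD, hD_diag]
  set U := Dᵀ⁻¹ * X
  have hXU : X = Dᵀ * U := (mul_nonsing_inv_cancel_left _ _ hdet).symm
  have hmul : (D * X)ᵀ * U = diagonal fun i => a i * b i := by
    rw [transpose_mul, Matrix.mul_assoc, ← hXU, hX]
  have hY : (D * X)ᵀ.IsUpperTriangular := hDX.transpose
  have hY_diag (i : ι) : (D * X)ᵀ i i = b i := hDX_diag i
  have hU : U.IsUpperTriangular := by
    refine isUpperTriangular_of_mul_left hY (fun i => hY_diag i ▸ hb i) ?_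
    rw [hmul]
    exact blockTriangular_diagonal _
  refine ⟨Dᵀ, U, ⟨hXU, hD.transpose, hD_diag, hU⟩, fun i => mul_left_cancel₀ (hb i) ?_⟩
  rw [← hY_diag i, ← mul_apply_self_of_isUpperTriangular hY hU, hmul, diagonal_apply_eq,
    hY_diag i, mul_comm]

end Triangular

end Matrix

section Coarsening

theorem sum_pow_le_pow_sum {ι : Type*} {k : ℕ} (hk : k ≠ 0) (A : Finset ι) (s : ι → ℕ) :
    ∑ i ∈ A, s i ^ k ≤ (∑ i ∈ A, s i) ^ k := by
  induction A using Finset.cons_induction with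
  | empty => simp [hk]
  | cons i A hi ih =>
    rw [Finset.sum_cons, Finset.sum_cons]
    exact (Nat.add_le_add_left ih _).trans (pow_add_pow_le zero_le zero_le hk)

theorem exists_equiv_comp_eq_of_map_eq {ι κ γ : Type*} [Fintype ι] [Fintype κ] {s : ι → γ}
    {t : κ → γ} (h : Finset.univ.val.map s = Finset.univ.val.map t) : ∃ e : ι ≃ κ, t ∘ e = s := by
  have hfibre (c : γ) : Nonempty ({i // s i = c} ≃ {j // t j = c}) := by
    rw [← Fintype.card_eq, Fintype.card_subtype, Fintype.card_subtype]
    have hcount := congrArg (Multiset.count c) h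
    simp only [Multiset.count_map, eq_comm (a := c)] at hcount
    exact hcount
  exact ⟨Equiv.ofFiberEquiv fun c => (hfibre c).some, funext (Equiv.ofFiberEquiv_map _)⟩

theorem card_perm_comp_eq {ι γ : Type*} [Fintype ι] [DecidableEq γ] (t : ι → γ) :
    Nat.card {σ : Equiv.Perm ι // t ∘ σ = t} =
      ∏ c ∈ (Finset.univ.val.map t).toFinset, ((Finset.univ.val.map t).count c).factorial := by
  rw [Nat.card_eq_fintype_card, DomMulAct.stabilizer_card']
  refine Finset.prod_congr rfl fun c _ => ?_
  rw [Multiset.count_map, Fintype.card_subtype]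
  simp only [eq_comm (a := c)]
  rfl

variable {ι κ : Type*} [Fintype ι] [DecidableEq κ]

/-- `φ` exhibits the weights `t` as a coarsening of the weights `s`: each `t j` is the sum of the
`s i` over the fibre `φ i = j`. -/
def IsCoarsening (s : ι → ℕ) (t : κ → ℕ) (φ : ι → κ) : Prop :=
  ∀ j, ∑ i with φ i = j, s i = t j

theorem IsCoarsening.sum_pow_le [Fintype κ] {s : ι → ℕ} {t : κ → ℕ} {φ : ι → κ}
    (hφ : IsCoarsening s t φ) {k : ℕ} (hk : k ≠ 0) : ∑ i, s i ^ k ≤ ∑ j, t j ^ k := by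
  rw [← Finset.sum_fiberwise Finset.univ φ]
  refine Finset.sum_le_sum fun j _ => ?_
  rw [← hφ j]
  exact sum_pow_le_pow_sum hk _ s

theorem isCoarsening_comp_equiv {ι' : Type*} [Fintype ι'] (e : ι' ≃ ι) (s : ι → ℕ) (t : κ → ℕ)
    (φ : ι → κ) : IsCoarsening (s ∘ e) t (φ ∘ e) ↔ IsCoarsening s t φ := by
  refine forall_congr' fun j => ?_
  rw [Finset.sum_equiv (t := {i | φ i = j}) (g := s) e (by simp) (by simp)]

theorem isCoarsening_self_iff {t : ι → ℕ} [DecidableEq ι] (ht : ∀ i, 0 < t i) {φ : ι → ι} :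
    IsCoarsening t t φ ↔ φ.Bijective ∧ t ∘ φ = t := by
  have hfibre (hφ : φ.Bijective) (i : ι) : ∑ i' with φ i' = φ i, t i' = t i := by
    simp [hφ.injective.eq_iff, Finset.filter_eq']
  constructor
  · intro h
    have hφ : φ.Bijective := by
      refine Function.Surjective.bijective_of_finite fun j => ?_
      have hj : ∑ i with φ i = j, t i ≠ 0 := (h j).trans_ne (ht j).ne'
      obtain ⟨i, hi, -⟩ := Finset.exists_ne_zero_of_sum_ne_zero hj
      exact ⟨i, (Finset.mem_filter.mp hi).2⟩
    exact ⟨hφ, funext fun i => (h (φ i)).symm.trans (hfibre hφ i)⟩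
  · rintro ⟨hφ, ht⟩ j
    obtain ⟨i, rfl⟩ := hφ.surjective j
    exact (hfibre hφ i).trans (congrFun ht i).symm

theorem card_isCoarsening_of_map_eq [Fintype κ] {s : ι → ℕ} {t : κ → ℕ} (ht : ∀ j, 0 < t j)
    (h : Finset.univ.val.map s = Finset.univ.val.map t) :
    Nat.card {φ // IsCoarsening s t φ} =
      ∏ c ∈ (Finset.univ.val.map t).toFinset, ((Finset.univ.val.map t).count c).factorial := by
  obtain ⟨e, rfl⟩ := exists_equiv_comp_eq_of_map_eq h
  rw [← card_perm_comp_eq]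
  calc Nat.card {φ // IsCoarsening (t ∘ e) t φ}
      = Nat.card {φ // IsCoarsening t t φ} :=
        Nat.card_congr <| (e.symm.arrowCongr (Equiv.refl κ)).subtypeEquiv
          (fun φ => (isCoarsening_comp_equiv e t t φ).symm) |>.symm
    _ = Nat.card {φ : {φ : κ → κ // φ.Bijective} // t ∘ φ = t} :=
        Nat.card_congr <| (Equiv.subtypeEquivRight fun φ => isCoarsening_self_iff ht).trans
          (Equiv.subtypeSubtypeEquivSubtypeInter _ _).symm
    _ = Nat.card {σ : Equiv.Perm κ // t ∘ σ = t} :=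
        Nat.card_congr <| Equiv.subtypeEquiv Equiv.bijectiveEquiv fun _ => Iff.rfl

end Coarsening

section Orbits

open Equiv.Perm

theorem partition_eq_of_filter_two_le_eq {μ ν : Nat.Partition n}
    (h : μ.parts.filter (2 ≤ ·) = ν.parts.filter (2 ≤ ·)) : μ = ν := by
  have hsplit (κ : Nat.Partition n) : κ.parts = κ.parts.filter (2 ≤ ·) +
      Multiset.replicate (n - (κ.parts.filter (2 ≤ ·)).sum) 1 := by
    have hones : κ.parts.filter (¬ 2 ≤ ·) =
        Multiset.replicate (κ.parts.filter (¬ 2 ≤ ·)).card 1 := by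
      refine Multiset.eq_replicate_card.mpr fun c hc => ?_
      have hpos := κ.parts_pos (Multiset.mem_of_mem_filter hc)
      have hlt := Multiset.of_mem_filter hc
      omega
    have hparts := Multiset.filter_add_not (2 ≤ ·) κ.parts
    have hsum := κ.parts_sum
    rw [← hparts, hones, Multiset.sum_add, Multiset.sum_replicate, smul_eq_mul, mul_one] at hsum
    rw [Nat.sub_eq_of_eq_add' hsum.symm, ← hones, hparts]
  exact Nat.Partition.ext (by rw [hsplit μ, hsplit ν, h])

theorem apply_eq_of_sameCycle {α κ : Type*} {g : Equiv.Perm α} {f : α → κ}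
    (hf : ∀ x, f (g x) = f x) {x y : α} (h : g.SameCycle x y) : f x = f y := by
  obtain ⟨k, rfl⟩ := h
  induction k with
  | zero => rfl
  | succ k ih => rw [add_comm, zpow_add, zpow_one, Equiv.Perm.mul_apply, hf, ih]
  | pred k ih =>
    rw [ih, ← hf ((g ^ (-k - 1 : ℤ)) x), ← Equiv.Perm.mul_apply, ← zpow_one_add, add_sub_cancel]

variable {α : Type*} [Fintype α] (g : Equiv.Perm α)

/-- The number of points in an orbit `ω` of the permutation `g`. -/
noncomputable def orbitSize (ω : Quotient (SameCycle.setoid g)) : ℕ :=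
  Finset.card {x : α | ⟦x⟧ = ω}

variable {g}

theorem orbitSize_mk_of_apply_eq {x : α} (hx : g x = x) : orbitSize g ⟦x⟧ = 1 := by
  refine Finset.card_eq_one.mpr ⟨x, Finset.ext fun y => ?_⟩
  rw [Finset.mem_filter_univ, Quotient.eq, Finset.mem_singleton]
  exact ⟨fun h => h.eq_of_right hx, fun h => h ▸ SameCycle.refl g x⟩

theorem orbitSize_pos (ω : Quotient (SameCycle.setoid g)) : 0 < orbitSize g ω := by
  obtain ⟨x, rfl⟩ := Quotient.exists_rep ω
  exact Finset.card_pos.mpr ⟨x, by simp⟩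

theorem card_filter_comp_mk {κ : Type*} [DecidableEq κ] (φ : Quotient (SameCycle.setoid g) → κ)
    (j : κ) : Finset.card {x | φ ⟦x⟧ = j} = ∑ ω with φ ω = j, orbitSize g ω := by
  rw [Finset.card_eq_sum_card_fiberwise (f := Quotient.mk (SameCycle.setoid g))
    (t := {ω | φ ω = j}) (by intro x; simp)]
  refine Finset.sum_congr rfl fun ω hω => congrArg Finset.card ?_
  rw [Finset.filter_filter]
  refine Finset.filter_congr fun x _ => and_iff_right_of_imp ?_
  rintro rfl
  exact (Finset.mem_filter.mp hω).2

theorem sum_orbitSize : ∑ ω, orbitSize g ω = Fintype.card α :=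
  (Finset.card_eq_sum_card_fiberwise fun _ _ => Finset.mem_coe.mpr (Finset.mem_univ _)).symm

variable (g) in
/-- The functions invariant under `g`, as functions on the orbits of `g`. -/
def invariantFunEquiv (κ : Type*) :
    {f : α → κ // ∀ x, f (g x) = f x} ≃ (Quotient (SameCycle.setoid g) → κ) where
  toFun f := Quotient.lift f.1 fun _ _ h => apply_eq_of_sameCycle f.2 h
  invFun φ := ⟨fun x => φ ⟦x⟧, fun x =>
    congrArg φ (Quotient.sound (sameCycle_apply_left.mpr (SameCycle.refl g x)))⟩
  left_inv _ := rfl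
  right_inv _ := funext fun ω => Quotient.inductionOn ω fun _ => rfl

theorem orbitSize_mk_of_apply_ne [DecidableEq α] {x : α} (hx : g x ≠ x) :
    orbitSize g ⟦x⟧ = (g.cycleOf x).support.card := by
  refine congrArg Finset.card (Finset.ext fun y => ?_)
  rw [mem_support_cycleOf_iff' hx, Finset.mem_filter_univ, Quotient.eq]
  exact sameCycle_comm

theorem two_le_orbitSize_mk_iff {x : α} : 2 ≤ orbitSize g ⟦x⟧ ↔ g x ≠ x := by
  by_cases hx : g x = x
  · simp [orbitSize_mk_of_apply_eq hx, hx]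
  · rw [orbitSize_mk_of_apply_ne hx]
    exact two_le_card_support_cycleOf_iff

variable [DecidableEq α]

theorem filter_two_le_map_orbitSize :
    (Finset.univ.val.map (orbitSize g)).filter (2 ≤ ·) = g.cycleType := by
  let cycle : Quotient (SameCycle.setoid g) → Equiv.Perm α :=
    Quotient.lift g.cycleOf fun _ _ h => h.cycleOf_eq
  let nontrivialOrbits := Finset.univ.val.filter ((2 ≤ ·) ∘ orbitSize g)
  have apply_ne {x : α} (hx : ⟦x⟧ ∈ nontrivialOrbits) : g x ≠ x :=
    two_le_orbitSize_mk_iff.mp (Multiset.mem_filter.mp hx).2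
  rw [Multiset.filter_map, cycleType_def]
  refine Multiset.map_eq_map_of_bij_of_nodup _ _ (Finset.univ.nodup.filter _)
    g.cycleFactorsFinset.nodup (fun ω _ => cycle ω) ?_ ?_ ?_ ?_
  · rintro ⟨x⟩ hx
    exact cycleOf_mem_cycleFactorsFinset_iff.mpr (mem_support.mpr (apply_ne hx))
  · rintro ⟨x⟩ hx ⟨y⟩ hy hxy
    exact Quotient.sound ((sameCycle_iff_cycleOf_eq_of_mem_support
      (mem_support.mpr (apply_ne hx)) (mem_support.mpr (apply_ne hy))).mpr hxy)
  · intro c hc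
    obtain ⟨x, hx⟩ := (mem_cycleFactorsFinset_iff.mp hc).1.nonempty_support
    have hgx := mem_support.mp (mem_cycleFactorsFinset_support_le hc hx)
    exact ⟨⟦x⟧, Multiset.mem_filter.mpr ⟨Finset.mem_univ_val _, two_le_orbitSize_mk_iff.mpr hgx⟩,
      (cycle_is_cycleOf hx hc).symm⟩
  · rintro ⟨x⟩ hx
    exact orbitSize_mk_of_apply_ne (apply_ne hx)

theorem map_orbitSize : Finset.univ.val.map (orbitSize g) = g.partition.parts := by
  let π : Nat.Partition (Fintype.card α) :=
    { parts := Finset.univ.val.map (orbitSize g)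
      parts_pos := by
        intro c hc
        obtain ⟨ω, -, rfl⟩ := Multiset.mem_map.mp hc
        exact orbitSize_pos ω
      parts_sum := sum_orbitSize }
  refine congrArg Nat.Partition.parts (a₁ := π) (partition_eq_of_filter_two_le_eq ?_)
  rw [filter_parts_partition_eq_cycleType]
  exact filter_two_le_map_orbitSize

end Orbits

section PermChar

theorem coe_descList (μ : Nat.Partition n) : (descList μ : Multiset ℕ) = μ.parts := by
  rw [descList, Multiset.coe_reverse, Multiset.sort_eq]

theorem descList_injective : Function.Injective (descList (n := n)) := fun μ ν h =>
  Nat.Partition.ext (by rw [← coe_descList, h, coe_descList])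

theorem pos_of_mem_descList {μ : Nat.Partition n} {c : ℕ} (hc : c ∈ descList μ) : 0 < c :=
  μ.parts_pos (by rwa [← coe_descList, Multiset.mem_coe])

theorem pairwise_descList (μ : Nat.Partition n) : (descList μ).Pairwise (· ≥ ·) :=
  List.pairwise_reverse.mpr (Multiset.pairwise_sort _ _)

theorem map_get_descList (μ : Nat.Partition n) :
    Finset.univ.val.map (descList μ).get = μ.parts := by
  rw [← coe_descList, Fin.univ_val_map, List.ofFn_get]

theorem sum_map_pow_descList (μ : Nat.Partition n) (k : ℕ) :
    ((descList μ).map (· ^ k)).sum = (μ.parts.map (· ^ k)).sum := by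
  rw [← coe_descList, Multiset.map_coe, Multiset.sum_coe]

theorem cycleTypePartition_parts (g : Equiv.Perm (Fin n)) :
    (cycleTypePartition g).parts = g.partition.parts := by
  have parts_cast {m : ℕ} (h : Fintype.card (Fin n) = m) :
      (h ▸ g.partition : Nat.Partition m).parts = g.partition.parts := by
    subst h
    rfl
  exact parts_cast _

theorem permChar_eq_card_isCoarsening (lam : Nat.Partition n) (g : Equiv.Perm (Fin n)) :
    permChar lam g = Nat.card {φ // IsCoarsening (orbitSize g) (descList lam).get φ} := by
  rw [permChar, ← Nat.card_eq_fintype_card]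
  refine Nat.card_congr ((Equiv.subtypeSubtypeEquivSubtypeInter _ _).symm.trans
    ((invariantFunEquiv g _).symm.subtypeEquiv fun φ => ?_).symm)
  exact forall_congr' fun j => by rw [← card_filter_comp_mk φ j]; rfl

theorem permChar_cycleTypePartition_self (g : Equiv.Perm (Fin n)) :
    permChar (cycleTypePartition g) g = bNum (cycleTypePartition g) := by
  have hparts : Finset.univ.val.map (orbitSize g) =
      Finset.univ.val.map (descList (cycleTypePartition g)).get := by
    rw [map_get_descList, cycleTypePartition_parts, map_orbitSize]
  rw [permChar_eq_card_isCoarsening, bNum, ← map_get_descList,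
    card_isCoarsening_of_map_eq (fun j => pos_of_mem_descList (List.get_mem _ j)) hparts]

theorem sum_pow_parts_le_of_permChar_ne_zero {lam : Nat.Partition n} {g : Equiv.Perm (Fin n)}
    (h : permChar lam g ≠ 0) {k : ℕ} (hk : k ≠ 0) :
    ((cycleTypePartition g).parts.map (· ^ k)).sum ≤ (lam.parts.map (· ^ k)).sum := by
  rw [permChar_eq_card_isCoarsening] at h
  obtain ⟨⟨φ, hφ⟩⟩ := (Nat.card_ne_zero.mp h).1
  rw [cycleTypePartition_parts, ← map_orbitSize, ← map_get_descList, Multiset.map_map,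
    Multiset.map_map]
  exact hφ.sum_pow_le hk

end PermChar

section LexOrder

open Filter Topology

theorem eventually_sum_map_pow_lt {x y : ℕ} (hxy : x < y) {l : List ℕ} (hl : ∀ c ∈ l, c ≤ x) :
    ∀ᶠ k in atTop, (l.map (· ^ k)).sum < y ^ k := by
  have hy : (0 : ℝ) < y := Nat.cast_pos.mpr (Nat.zero_lt_of_lt hxy)
  have hlim : Tendsto (fun k => (l.length : ℝ) * (x / y : ℝ) ^ k) atTop (𝓝 0) := by
    have hlt : (x / y : ℝ) < 1 := (div_lt_one hy).mpr (Nat.cast_lt.mpr hxy)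
    simpa only [mul_zero] using
      (tendsto_pow_atTop_nhds_zero_of_lt_one (by positivity) hlt).const_mul (l.length : ℝ)
  filter_upwards [hlim.eventually_lt_const one_pos] with k hk
  rw [div_pow, ← mul_div_assoc, div_lt_one (pow_pos hy k)] at hk
  calc (l.map (· ^ k)).sum ≤ l.length * x ^ k := by
        simpa only [List.length_map, smul_eq_mul] using
          List.sum_le_card_nsmul (l.map (· ^ k)) (x ^ k)
            (List.forall_mem_map.mpr fun c hc => Nat.pow_le_pow_left (hl c hc) k)
    _ < y ^ k := mod_cast hk

theorem eventually_sum_map_pow_lt_of_lex {l₁ l₂ : List ℕ} (h : List.Lex (· < ·) l₁ l₂)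
    (hl₁ : l₁.Pairwise (· ≥ ·)) (hl₂ : ∀ c ∈ l₂, 0 < c) :
    ∀ᶠ k in atTop, (l₁.map (· ^ k)).sum < (l₂.map (· ^ k)).sum := by
  induction h with
  | nil =>
    refine .of_forall fun k => ?_
    rw [List.map_cons, List.sum_cons]
    exact Nat.add_pos_left (Nat.pow_pos (hl₂ _ List.mem_cons_self)) _
  | cons _ ih =>
    filter_upwards [ih hl₁.of_cons fun c hc => hl₂ c (List.mem_cons_of_mem _ hc)] with k hk
    simpa only [List.map_cons, List.sum_cons, add_lt_add_iff_left] using hk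
  | rel hxy =>
    filter_upwards [eventually_sum_map_pow_lt hxy
      (List.forall_mem_cons.mpr ⟨le_rfl, fun c hc => List.rel_of_pairwise_cons hl₁ hc⟩)] with k hk
    refine hk.trans_le ?_
    rw [List.map_cons, List.sum_cons]
    exact Nat.le_add_right _ _

theorem not_plex_of_permChar_ne_zero {lam : Nat.Partition n} {g : Equiv.Perm (Fin n)}
    (h : permChar lam g ≠ 0) : ¬ plex lam (cycleTypePartition g) := by
  intro hlt
  obtain ⟨k, hk, hk0⟩ := ((eventually_sum_map_pow_lt_of_lex hlt (pairwise_descList lam)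
    fun _ => pos_of_mem_descList).and (eventually_ne_atTop 0)).exists
  rw [sum_map_pow_descList, sum_map_pow_descList] at hk
  exact hk.not_ge (sum_pow_parts_le_of_permChar_ne_zero h hk0)

end LexOrder

section ConjugacyClasses

open Equiv.Perm

theorem cycleTypePartition_eq_iff {g h : Equiv.Perm (Fin n)} :
    cycleTypePartition g = cycleTypePartition h ↔ IsConj g h := by
  rw [partition_eq_of_isConj, Nat.Partition.ext_iff, Nat.Partition.ext_iff,
    cycleTypePartition_parts, cycleTypePartition_parts]

theorem cycleTypePartition_inv (g : Equiv.Perm (Fin n)) :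
    cycleTypePartition g⁻¹ = cycleTypePartition g := by
  rw [cycleTypePartition_eq_iff, isConj_iff_cycleType_eq, cycleType_inv]

theorem cycleTypePartition_surjective : Function.Surjective (cycleTypePartition (n := n)) := by
  intro μ
  have hsum : (μ.parts.filter (2 ≤ ·)).sum ≤ n := by
    conv_rhs => rw [← μ.parts_sum, ← Multiset.filter_add_not (2 ≤ ·) μ.parts, Multiset.sum_add]
    exact Nat.le_add_right _ _
  obtain ⟨g, hg⟩ := (exists_with_cycleType_iff (Fin n)).mpr
    ⟨hsum.trans_eq (Fintype.card_fin n).symm, fun _ => Multiset.of_mem_filter⟩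
  refine ⟨g, partition_eq_of_filter_two_le_eq ?_⟩
  rw [cycleTypePartition_parts, filter_parts_partition_eq_cycleType, hg]

theorem prod_factorial_count_add {γ : Type*} [DecidableEq γ] {s t : Multiset γ}
    (h : Disjoint s t) :
    ∏ c ∈ (s + t).toFinset, ((s + t).count c).factorial =
      (∏ c ∈ s.toFinset, (s.count c).factorial) * ∏ c ∈ t.toFinset, (t.count c).factorial := by
  rw [Multiset.toFinset_add, Finset.prod_union (Multiset.disjoint_toFinset.mpr h)]
  congr 1 <;> refine Finset.prod_congr rfl fun c hc => ?_
  · rw [Multiset.count_add, Multiset.count_eq_zero_of_notMem (s := t)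
      (Multiset.disjoint_left.mp h (Multiset.mem_toFinset.mp hc)), add_zero]
  · rw [Multiset.count_add, Multiset.count_eq_zero_of_notMem (s := s)
      (Multiset.disjoint_right.mp h (Multiset.mem_toFinset.mp hc)), zero_add]

theorem prod_factorial_count_replicate {γ : Type*} [DecidableEq γ] (k : ℕ) (c : γ) :
    ∏ i ∈ (Multiset.replicate k c).toFinset, ((Multiset.replicate k c).count i).factorial =
      k.factorial := by
  rcases eq_or_ne k 0 with rfl | hk
  · rfl
  · rw [Multiset.toFinset_replicate, if_neg hk, Finset.prod_singleton,
      Multiset.count_replicate_self]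

theorem zNum_cycleTypePartition (g : Equiv.Perm (Fin n)) :
    zNum (cycleTypePartition g) = (n - g.cycleType.sum).factorial * g.cycleType.prod *
      ∏ c ∈ g.cycleType.toFinset, (g.cycleType.count c).factorial := by
  have hdisj : Disjoint g.cycleType (Multiset.replicate (n - g.cycleType.sum) 1) := by
    refine Multiset.disjoint_right.mpr fun hc hmem => ?_
    exact absurd (two_le_of_mem_cycleType hmem) (by rw [Multiset.eq_of_mem_replicate hc]; decide)
  rw [zNum, aNum, bNum, cycleTypePartition_parts, parts_partition, Fintype.card_fin,
    ← sum_cycleType, prod_factorial_count_add hdisj, prod_factorial_count_replicate,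
    Multiset.prod_add, Multiset.prod_replicate, one_pow]
  ring

/-- The number of permutations with cycle type `μ`. -/
noncomputable def classCard (μ : Nat.Partition n) : ℕ :=
  Finset.card {g | cycleTypePartition g = μ}

theorem classCard_mul_zNum (μ : Nat.Partition n) : classCard μ * zNum μ = n.factorial := by
  obtain ⟨g, rfl⟩ := cycleTypePartition_surjective μ
  have hclass : classCard (cycleTypePartition g) = Nat.card {h | IsConj g h} := by
    rw [classCard, ← Fintype.card_subtype, ← Nat.card_eq_fintype_card]
    simp only [← cycleTypePartition_eq_iff, eq_comm (b := cycleTypePartition g)]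
    rfl
  rw [hclass, zNum_cycleTypePartition]
  simpa only [Fintype.card_fin] using card_isConj_mul_eq g

theorem sum_comp_cycleTypePartition {M : Type*} [AddCommMonoid M] (f : Nat.Partition n → M) :
    ∑ g, f (cycleTypePartition g) = ∑ μ, classCard μ • f μ := by
  rw [← Finset.sum_fiberwise Finset.univ cycleTypePartition]
  exact Finset.sum_congr rfl fun μ _ =>
    Finset.sum_eq_card_nsmul fun g hg => congrArg f (Finset.mem_filter.mp hg).2

theorem aNum_ne_zero (μ : Nat.Partition n) : aNum μ ≠ 0 :=
  Multiset.prod_ne_zero fun h => (μ.parts_pos h).ne rfl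

theorem bNum_ne_zero (μ : Nat.Partition n) : bNum μ ≠ 0 :=
  Finset.prod_ne_zero_iff.mpr fun _ _ => Nat.factorial_ne_zero _

end ConjugacyClasses

section CharTable

open Matrix

/-- The total lexicographic order on partitions, whose strict part is `plex`. -/
noncomputable abbrev lexOrder (n : ℕ) : LinearOrder (Nat.Partition n) :=
  LinearOrder.lift' descList descList_injective

namespace IsCharTable

variable {X : Nat.Partition n → Nat.Partition n → ℤ}

theorem sum_mul_eq_ite (hX : IsCharTable X) (lam mu : Nat.Partition n) :
    ∑ g, X lam (cycleTypePartition g) * X mu (cycleTypePartition g) =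
      if lam = mu then (n.factorial : ℤ) else 0 := by
  choose V hV hVX using hX.1
  have := hV lam
  have := hV mu
  have hcard : (Nat.card (Equiv.Perm (Fin n)) : ℂ) = n.factorial := by
    rw [Nat.card_perm, Nat.card_fin]
  have hcard_ne : (Nat.card (Equiv.Perm (Fin n)) : ℂ) ≠ 0 :=
    hcard ▸ Nat.cast_ne_zero.mpr n.factorial_ne_zero
  have hiso : Nonempty (V lam ≅ V mu) ↔ lam = mu := by
    refine ⟨fun ⟨i⟩ => hX.2.2 (funext fun ν => ?_), fun h => h ▸ ⟨CategoryTheory.Iso.refl _⟩⟩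
    obtain ⟨g, rfl⟩ := cycleTypePartition_surjective ν
    exact_mod_cast (hVX lam g).symm.trans ((congrFun (FDRep.char_iso i) g).trans (hVX mu g))
  let := invertibleOfNonzero hcard_ne
  have horth := FDRep.char_orthonormal (V lam) (V mu)
  simp only [hVX, cycleTypePartition_inv, hiso] at horth
  rw [inv_mul_eq_iff_eq_mul₀ hcard_ne, hcard, mul_ite, mul_one, mul_zero] at horth
  exact_mod_cast horth

theorem mul_diagonal_classCard_mul_transpose (hX : IsCharTable X) :
    of X * (diagonal (fun μ => (classCard μ : ℤ)) * (of X)ᵀ) =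
      (n.factorial : ℤ) • (1 : Matrix (Nat.Partition n) (Nat.Partition n) ℤ) := by
  ext lam mu
  rw [Matrix.smul_apply, one_apply, smul_eq_mul, mul_ite, mul_one, mul_zero, ← hX.sum_mul_eq_ite,
    sum_comp_cycleTypePartition fun ν => X lam ν * X mu ν, mul_apply]
  refine Finset.sum_congr rfl fun ν _ => ?_
  rw [diagonal_mul, transpose_apply, of_apply, of_apply, nsmul_eq_mul, mul_left_comm]

theorem transpose_mul_self (hX : IsCharTable X) :
    (of X)ᵀ * of X = diagonal fun μ => (aNum μ * bNum μ : ℤ) :=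
  transpose_mul_self_eq_diagonal (Nat.cast_ne_zero.mpr n.factorial_ne_zero)
    (fun μ => mod_cast classCard_mul_zNum μ) hX.mul_diagonal_classCard_mul_transpose

attribute [local instance] lexOrder

theorem exists_isLU (hX : IsCharTable X) :
    ∃ L U : Matrix (Nat.Partition n) (Nat.Partition n) ℤ,
      IsLU (of X) L U ∧ ∀ μ, U μ μ = aNum μ := by
  obtain ⟨D, hD_diag, hD, hDX⟩ := hX.2.1
  have hmul (lam : Nat.Partition n) (g : Equiv.Perm (Fin n)) :
      (of D * of X) lam (cycleTypePartition g) = permChar lam g := (hDX lam g).symm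
  refine exists_isLU_of_transpose_mul_self (D := of D) (b := fun μ => (bNum μ : ℤ)) ?_ hD_diag
    ?_ ?_ (fun μ => Nat.cast_ne_zero.mpr (bNum_ne_zero μ))
    (by convert hX.transpose_mul_self)
  · intro lam mu (hlt : mu < lam)
    by_contra hne
    rcases hD lam mu hne with rfl | h
    · exact hlt.false
    · exact hlt.asymm h
  · intro lam mu (hlt : lam < mu)
    obtain ⟨g, rfl⟩ := cycleTypePartition_surjective mu
    by_contra hne
    rw [hmul] at hne
    exact not_plex_of_permChar_ne_zero (Nat.cast_ne_zero.mp hne) hlt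
  · intro mu
    obtain ⟨g, rfl⟩ := cycleTypePartition_surjective mu
    rw [hmul, permChar_cycleTypePartition_self]

end IsCharTable

end CharTable

/-- **Theorem 3.3.** For a partition `α` of `n`: (1) the restrictions of the irreducible
characters `χ^λ`, `λ < α`, to the classes of cycle type `< α` form a ℤ-basis for the ℤ-span of
the restrictions of all the irreducible characters to those classes, and (2)
`det X_(α) = ∏_{μ < α} a_μ`, where `X_(α) = (χ^λ_μ)_{λ,μ < α}`. -/
theorem small_basic_set_and_det (n : ℕ) (X : Nat.Partition n → Nat.Partition n → ℤ)
    (hX : IsCharTable X) (α : Nat.Partition n) :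
    ((LinearIndependent ℤ fun lam : {lam : Nat.Partition n // plex lam α} =>
        fun μ : {μ : Nat.Partition n // plex μ α} => X lam.1 μ.1) ∧
      Submodule.span ℤ (Set.range fun lam : {lam : Nat.Partition n // plex lam α} =>
          fun μ : {μ : Nat.Partition n // plex μ α} => X lam.1 μ.1) =
        Submodule.span ℤ (Set.range fun lam : Nat.Partition n =>
          fun μ : {μ : Nat.Partition n // plex μ α} => X lam μ.1)) ∧
    (Matrix.of fun lam mu : {μ : Nat.Partition n // plex μ α} => X lam.1 mu.1).det =
      ∏ μ : {μ : Nat.Partition n // plex μ α}, (aNum μ.1 : ℤ) := by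
  let := lexOrder n
  obtain ⟨L, U, hLU, hU⟩ := hX.exists_isLU
  have hlower : Antitone (plex · α) := fun lam mu hle (hlt : mu < α) => hle.trans_lt hlt
  have hblock := hLU.toSquareBlockProp hlower
  have hdiag (μ : {μ : Nat.Partition n // plex μ α}) : U μ.1 μ.1 ≠ 0 :=
    hU μ.1 ▸ Nat.cast_ne_zero.mpr (aNum_ne_zero μ.1)
  refine ⟨⟨hblock.linearIndependent_row hdiag,
    hLU.span_range_row_toSquareBlockProp hlower⟩, ?_⟩
  calc _ = ∏ μ : {μ : Nat.Partition n // plex μ α}, U μ.1 μ.1 := by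
        convert hblock.det_eq_prod_diag <;> rfl
    _ = _ := Finset.prod_congr rfl fun μ _ => hU μ.1

end SnTable
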